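/- arXiv:1103.4906 — 2 statements merged into one kernel-verified Lean document; each statement's English description precedes it below -/
import Mathlib

section
/- For each fixed parameter tuple, the Sasano system has at most one rational solution: if (q1,p1,q2,p2) and (q̃1,p̃1,q̃2,p̃2) are both rational solutions of A5^(2)(α0,α1,α2,α3), then q1 = q̃1, p1 = p̃1, q2 = q̃2 and p2 = p̃2 as rational functions. -/
open Filter Topology Polynomial

/-- Evaluation of a rational function with complex coefficients at a point,
using its reduced numerator and denominator. -/
noncomputable def evR (f : RatFunc ℂ) (t : ℂ) : ℂ := f.num.eval t / f.denom.eval t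

/-- A rational function has no pole at `c` if its reduced denominator does not vanish at `c`. -/
def NoPoleAt (f : RatFunc ℂ) (c : ℂ) : Prop := f.denom.eval c ≠ 0

/-- `(q1, p1, q2, p2)` is a rational solution of the Sasano system
`A5^(2)(α0, α1, α2, α3)` (the parameter `α2` does not occur in the equations):
the four differential equations hold at every point `t ∈ ℂ` which is not a pole
of any of `q1, p1, q2, p2`. -/
def IsSasanoSol (a0 a1 a3 : ℂ) (q1 p1 q2 p2 : RatFunc ℂ) : Prop :=
  ∀ t : ℂ, NoPoleAt q1 t → NoPoleAt p1 t → NoPoleAt q2 t → NoPoleAt p2 t →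
    (t * deriv (evR q1) t =
      2 * (evR q1 t) ^ 2 * evR p1 t - (evR q1 t) ^ 2 + (a0 + a1 + a3) * evR q1 t
        - t + 4 * t * evR p2 t + 2 * evR q1 t * evR q2 t * evR p2 t) ∧
    (t * deriv (evR p1) t =
      -2 * evR q1 t * (evR p1 t) ^ 2 + 2 * evR q1 t * evR p1 t
        - (a0 + a1 + a3) * evR p1 t + a0 - 2 * evR p1 t * evR q2 t * evR p2 t) ∧
    (t * deriv (evR q2) t =
      2 * (evR q2 t) ^ 2 * evR p2 t - (evR q2 t) ^ 2 + (a0 + a1 + a3) * evR q2 t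
        - t + 4 * t * evR p1 t + 2 * evR q1 t * evR p1 t * evR q2 t) ∧
    (t * deriv (evR p2) t =
      -2 * evR q2 t * (evR p2 t) ^ 2 + 2 * evR q2 t * evR p2 t
        - (a0 + a1 + a3) * evR p2 t + a1 - 2 * evR q1 t * evR p1 t * evR p2 t)

/-- Degree bound at infinity. -/
def Bd (n : ℤ) (f : RatFunc ℂ) : Prop := f = 0 ∨ f.intDegree ≤ n

namespace Bd

variable {n m k : ℤ} {f g : RatFunc ℂ}

lemma mono (h : Bd m f) (hmn : m ≤ n) : Bd n f := by
  rcases h with h | h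
  · exact Or.inl h
  · exact Or.inr (h.trans hmn)

lemma zero : Bd n 0 := Or.inl rfl

lemma add (hf : Bd n f) (hg : Bd n g) : Bd n (f + g) := by
  by_cases h0 : g = 0
  · simpa [h0] using hf
  by_cases h1 : f = 0
  · simpa [h1] using hg
  by_cases h2 : f + g = 0
  · exact Or.inl h2
  · exact Or.inr ((RatFunc.intDegree_add_le h0 h2).trans
      (max_le (hf.resolve_left h1) (hg.resolve_left h0)))

lemma neg (hf : Bd n f) : Bd n (-f) := by
  rcases hf with h | h
  · exact Or.inl (by simp [h])
  · exact Or.inr (by simpa using h)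

lemma sub (hf : Bd n f) (hg : Bd n g) : Bd n (f - g) := by
  rw [sub_eq_add_neg]; exact hf.add hg.neg

lemma mul (hf : Bd m f) (hg : Bd k g) (h : m + k ≤ n) : Bd n (f * g) := by
  by_cases h0 : f = 0
  · exact Or.inl (by simp [h0])
  by_cases h1 : g = 0
  · exact Or.inl (by simp [h1])
  right
  rw [RatFunc.intDegree_mul h0 h1]
  have := hf.resolve_left h0
  have := hg.resolve_left h1
  omega

lemma const (c : ℂ) : Bd 0 (RatFunc.C c) := Or.inr (by simp)

lemma two : Bd 0 (2 : RatFunc ℂ) := by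
  have := const 2
  rwa [map_ofNat] at this

lemma four : Bd 0 (4 : RatFunc ℂ) := by
  have := const 4
  rwa [map_ofNat] at this

lemma dbl (h : Bd n f) : Bd n (2 * f) := two.mul h (by omega)
lemma quad (h : Bd n f) : Bd n (4 * f) := four.mul h (by omega)

lemma X : Bd 1 (RatFunc.X : RatFunc ℂ) := Or.inr (by simp)

lemma not_X : ¬ Bd 0 (RatFunc.X : RatFunc ℂ) := by
  rintro (h | h)
  · exact RatFunc.X_ne_zero h
  · simp at h

lemma cancel (h0 : f ≠ 0) (h : Bd n (f * g)) : Bd (n - f.intDegree) g := by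
  by_cases h1 : g = 0
  · exact Or.inl h1
  right
  have := h.resolve_left (mul_ne_zero h0 h1)
  rw [RatFunc.intDegree_mul h0 h1] at this
  omega

lemma of_const {c : ℂ} (hc : c ≠ 0) (h : Bd n (RatFunc.C c * f)) : Bd n f := by
  have := h.cancel (by simpa using hc)
  simpa using this

lemma of_two (h : Bd n (2 * f)) : Bd n f := of_const (c := 2) (by norm_num) (by rwa [map_ofNat])
lemma of_four (h : Bd n (4 * f)) : Bd n f := of_const (c := 4) (by norm_num) (by rwa [map_ofNat])
lemma of_X (h : Bd n (RatFunc.X * f)) : Bd (n - 1) f := by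
  have := h.cancel RatFunc.X_ne_zero
  simpa using this

lemma of_not (h : ¬ Bd n f) : f ≠ 0 ∧ n < f.intDegree ∧ Bd f.intDegree f :=
  ⟨fun h0 => h (Or.inl h0), by by_contra h1; exact h (Or.inr (by omega)), Or.inr le_rfl⟩

lemma self : Bd f.intDegree f := Or.inr le_rfl

lemma sq_contra (h0 : f ≠ 0) (h1 : 0 < f.intDegree) (h : Bd f.intDegree (f * f)) : False := by
  have := h.resolve_left (mul_ne_zero h0 h0)
  rw [RatFunc.intDegree_mul h0 h0] at this
  omega

lemma eq_zero_of_forall (h : ∀ k : ℕ, Bd (-k) f) : f = 0 := by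
  by_contra h0
  have := (h (f.intDegree.natAbs + 1)).resolve_left h0
  omega

end Bd

/-- Euler derivative `t d/dt` on rational functions. -/
noncomputable def theta (f : RatFunc ℂ) : RatFunc ℂ :=
  RatFunc.X * algebraMap ℂ[X] (RatFunc ℂ)
    (derivative f.num * f.denom - f.num * derivative f.denom) /
    (algebraMap ℂ[X] (RatFunc ℂ) f.denom) ^ 2

lemma am_ne {p : ℂ[X]} (h : p ≠ 0) : algebraMap ℂ[X] (RatFunc ℂ) p ≠ 0 := by
  simpa using h

lemma theta_eq (f : RatFunc ℂ) (a b : ℂ[X]) (hb : b ≠ 0)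
    (h : f.num * b = a * f.denom) :
    theta f = RatFunc.X * algebraMap ℂ[X] (RatFunc ℂ) (derivative a * b - a * derivative b) /
    (algebraMap ℂ[X] (RatFunc ℂ) b) ^ 2 := by
  have hd := f.denom_ne_zero
  have h' := congrArg derivative h
  simp only [derivative_mul] at h'
  unfold theta
  rw [div_eq_div_iff (pow_ne_zero _ (am_ne hd)) (pow_ne_zero _ (am_ne hb))]
  have k := congrArg (algebraMap ℂ[X] (RatFunc ℂ)) h
  have k' := congrArg (algebraMap ℂ[X] (RatFunc ℂ)) h'
  simp only [map_add, map_mul, map_sub] at k k' ⊢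
  generalize algebraMap ℂ[X] (RatFunc ℂ) (derivative f.num) = n' at *
  generalize algebraMap ℂ[X] (RatFunc ℂ) (derivative f.denom) = d' at *
  generalize algebraMap ℂ[X] (RatFunc ℂ) (derivative a) = a' at *
  generalize algebraMap ℂ[X] (RatFunc ℂ) (derivative b) = b' at *
  generalize algebraMap ℂ[X] (RatFunc ℂ) f.num = n at *
  generalize algebraMap ℂ[X] (RatFunc ℂ) f.denom = d at *
  generalize algebraMap ℂ[X] (RatFunc ℂ) a = aa at *
  generalize algebraMap ℂ[X] (RatFunc ℂ) b = bb at *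
  linear_combination RatFunc.X * (d * bb * k' - (d' * bb + d * b') * k)

lemma theta_add (f g : RatFunc ℂ) : theta (f + g) = theta f + theta g := by
  have hf := am_ne f.denom_ne_zero
  have hg := am_ne g.denom_ne_zero
  rw [theta_eq (f + g) _ _ (mul_ne_zero f.denom_ne_zero g.denom_ne_zero)
    (RatFunc.num_denom_add f g)]
  unfold theta
  simp only [derivative_mul, map_add, map_sub, map_mul]
  field_simp
  ring

lemma theta_neg (f : RatFunc ℂ) : theta (-f) = -theta f := by
  rw [theta_eq (-f) _ _ f.denom_ne_zero (RatFunc.num_denom_neg f)]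
  unfold theta
  simp only [map_neg, map_sub, map_mul]
  field_simp
  ring

lemma theta_sub (f g : RatFunc ℂ) : theta (f - g) = theta f - theta g := by
  rw [sub_eq_add_neg, theta_add, theta_neg, sub_eq_add_neg]

lemma Bd.theta {n : ℤ} {f : RatFunc ℂ} (h : Bd n f) : Bd n (theta f) := by
  rcases h with h | h
  · left; subst h; simp [_root_.theta]
  by_cases hN : derivative f.num * f.denom - f.num * derivative f.denom = 0
  · left; simp [_root_.theta, hN]
  right
  have hd := f.denom_ne_zero
  unfold _root_.theta
  rw [RatFunc.intDegree_div (mul_ne_zero RatFunc.X_ne_zero (am_ne hN)) (pow_ne_zero _ (am_ne hd)),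
    RatFunc.intDegree_mul RatFunc.X_ne_zero (am_ne hN), ← map_pow, RatFunc.intDegree_polynomial,
    RatFunc.intDegree_polynomial, RatFunc.intDegree_X, natDegree_pow]
  unfold RatFunc.intDegree at h
  have key : (derivative f.num * f.denom - f.num * derivative f.denom).natDegree + 1 ≤
      f.num.natDegree + f.denom.natDegree := by
    have h1 := natDegree_sub_le (derivative f.num * f.denom) (f.num * derivative f.denom)
    have h2 := natDegree_mul_le (p := derivative f.num) (q := f.denom)
    have h3 := natDegree_mul_le (p := f.num) (q := derivative f.denom)
    have h4 := natDegree_derivative_le f.num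
    have h5 := natDegree_derivative_le f.denom
    by_cases ha : f.num.natDegree = 0
    · by_cases hb : f.denom.natDegree = 0
      · exact absurd (by rw [derivative_of_natDegree_zero ha, derivative_of_natDegree_zero hb]; simp) hN
      · rw [derivative_of_natDegree_zero ha] at h1 ⊢
        simp only [zero_mul, zero_sub, natDegree_neg] at h1 ⊢
        omega
    · by_cases hb : f.denom.natDegree = 0
      · rw [derivative_of_natDegree_zero hb] at h1 ⊢
        simp only [mul_zero, sub_zero] at h1 ⊢
        omega
      · omega
  push_cast
  omega

/-- The system in the field of rational functions. -/
structure Sys (s a b q1 p1 q2 p2 S : RatFunc ℂ) : Prop where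
  hs : Bd 0 s
  ha : Bd 0 a
  hb : Bd 0 b
  hS : S = 2 * (q1 * p1) + 2 * (q2 * p2) + s
  e1 : theta q1 = q1 * (S - q1) - RatFunc.X + 4 * (RatFunc.X * p2)
  e2 : theta p1 = -(p1 * (S - 2 * q1)) + a
  e3 : theta q2 = q2 * (S - q2) - RatFunc.X + 4 * (RatFunc.X * p1)
  e4 : theta p2 = -(p2 * (S - 2 * q2)) + b

lemma Sys.swap {s a b q1 p1 q2 p2 S : RatFunc ℂ} (h : Sys s a b q1 p1 q2 p2 S) :
    Sys s b a q2 p2 q1 p1 S :=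
  ⟨h.hs, h.hb, h.ha, by rw [h.hS]; ring, h.e3, h.e4, h.e1, h.e2⟩

lemma dich {p W a : RatFunc ℂ} (ha : Bd 0 a) (h : theta p = -(p * W) + a) :
    Bd 0 W ∨ (¬ Bd 0 W ∧ Bd 0 (p * W) ∧ Bd (-1) p) := by
  by_cases hW : Bd 0 W
  · exact Or.inl hW
  refine Or.inr ⟨hW, ?_⟩
  obtain ⟨w0, w1, w2⟩ := Bd.of_not hW
  by_cases hp : p = 0
  · subst hp; exact ⟨Or.inl (by simp), Or.inl rfl⟩
  have e : p * W = a - theta p := by linear_combination h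
  have h1 : Bd (max 0 p.intDegree) (p * W) := by
    rw [e]
    exact (ha.mono (le_max_left _ _)).sub (Bd.self.theta.mono (le_max_right _ _))
  have h2 := h1.resolve_left (mul_ne_zero hp w0)
  rw [RatFunc.intDegree_mul hp w0] at h2
  constructor
  · right; rw [RatFunc.intDegree_mul hp w0]; omega
  · right; omega

section
variable {s a b q1 p1 q2 p2 S : RatFunc ℂ}

lemma caseAA (h : Sys s a b q1 p1 q2 p2 S) (h1 : Bd 0 (S - 2 * q1)) (h2 : Bd 0 (S - 2 * q2)) :
    Bd 0 q1 := by
  by_contra hq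
  obtain ⟨q0, hm, hB⟩ := Bd.of_not hq
  set m := q1.intDegree with hmdef
  have he : Bd 0 (q2 - q1) := by
    apply Bd.of_two
    rw [show 2 * (q2 - q1) = (S - 2 * q1) - (S - 2 * q2) by ring]
    exact h1.sub h2
  have hB2 : Bd m q2 := by
    rw [show q2 = q1 + (q2 - q1) by ring]
    exact hB.add (he.mono (by omega))
  have hX : Bd m RatFunc.X := Bd.X.mono (by omega)
  obtain ⟨R2, hR2⟩ : ∃ R, R = theta q1 + RatFunc.X - q1 * (S - 2 * q1) := ⟨_, rfl⟩
  obtain ⟨R1, hR1⟩ : ∃ R, R = theta q2 + RatFunc.X - q2 * (S - 2 * q2) := ⟨_, rfl⟩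
  have bR2 : Bd m R2 := by
    rw [hR2]; exact (hB.theta.add hX).sub (hB.mul h1 (by omega))
  have bR1 : Bd m R1 := by
    rw [hR1]; exact (hB2.theta.add hX).sub (hB2.mul h2 (by omega))
  obtain ⟨e, hee⟩ : ∃ e, e = q2 - q1 := ⟨_, rfl⟩
  rw [← hee] at he
  have key : 4 * (q1 * (q1 * q1)) = -(2 * ((q1 * q1) * e) + 4 * ((q1 * q1) * e))
      - 2 * (q1 * (e * e)) + 2 * (q1 * R1) + 2 * (q2 * R2) + 4 * (s * RatFunc.X)
      - 4 * (2 * (RatFunc.X * q1)) - 4 * (RatFunc.X * (S - 2 * q1)) := by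
    have hq2 : q2 = q1 + e := by rw [hee]; ring
    have E1 := h.e1
    have E3 := h.e3
    have HS := h.hS
    subst hq2
    rw [hR1, hR2]
    linear_combination (-2) * q1 * E3 - 2 * (q1 + e) * E1 + 4 * RatFunc.X * HS
  have hqq : Bd (2 * m) (q1 * q1) := hB.mul hB (by omega)
  have : Bd (2 * m) (4 * (q1 * (q1 * q1))) := by
    rw [key]
    have t1 : Bd (2 * m) ((q1 * q1) * e) := hqq.mul he (by omega)
    have t2 : Bd (2 * m) (q1 * (e * e)) := hB.mul (he.mul he le_rfl) (by omega)
    have t3 : Bd (2 * m) (q1 * R1) := hB.mul bR1 (by omega)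
    have t4 : Bd (2 * m) (q2 * R2) := hB2.mul bR2 (by omega)
    have t5 : Bd (2 * m) (s * RatFunc.X) := h.hs.mul hX (by omega)
    have t6 : Bd (2 * m) (RatFunc.X * q1) := hX.mul hB (by omega)
    have t7 : Bd (2 * m) (RatFunc.X * (S - 2 * q1)) := hX.mul h1 (by omega)
    exact ((((((t1.dbl.add t1.quad).neg.sub t2.dbl).add t3.dbl).add t4.dbl).add t5.quad).sub
      t6.dbl.quad).sub t7.quad
  have h3 := this.of_four.resolve_left (mul_ne_zero q0 (mul_ne_zero q0 q0))
  rw [RatFunc.intDegree_mul q0 (mul_ne_zero q0 q0), RatFunc.intDegree_mul q0 q0] at h3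
  omega

lemma caseAB (h : Sys s a b q1 p1 q2 p2 S) (h1 : Bd 0 (S - 2 * q1)) (h2 : ¬ Bd 0 (S - 2 * q2))
    (h3 : Bd 0 (p2 * (S - 2 * q2))) (h4 : Bd (-1) p2) : False := by
  have bXp2 : Bd 0 (RatFunc.X * p2) := Bd.X.mul h4 (by omega)
  have hq1 : Bd 0 q1 := by
    by_contra hq
    obtain ⟨q0, hm, hB⟩ := Bd.of_not hq
    apply Bd.sq_contra q0 hm
    rw [show q1 * q1 = theta q1 + RatFunc.X - 4 * (RatFunc.X * p2) - q1 * (S - 2 * q1) by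
      linear_combination -h.e1]
    exact ((hB.theta.add (Bd.X.mono (by omega))).sub (bXp2.quad.mono (by omega))).sub
      (hB.mul h1 (by omega))
  have hS : Bd 0 S := by
    rw [show S = (S - 2 * q1) + 2 * q1 by ring]
    exact h1.add hq1.dbl
  have hq2 : ¬ Bd 0 q2 := fun hh => h2 (hS.sub hh.dbl)
  have hx2 : Bd 0 (q2 * p2) := by
    apply Bd.of_two
    rw [show 2 * (q2 * p2) = p2 * S - p2 * (S - 2 * q2) by ring]
    exact (h4.mul hS (by omega)).sub h3
  have hx1 : Bd 0 (p1 * q1) := by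
    apply Bd.of_two
    rw [show 2 * (p1 * q1) = S - s - 2 * (q2 * p2) by rw [h.hS]; ring]
    exact (hS.sub h.hs).sub hx2.dbl
  have hp1 : ¬ Bd 0 p1 := by
    intro hp
    obtain ⟨q0, hm, hB⟩ := Bd.of_not hq2
    apply Bd.sq_contra q0 hm
    rw [show q2 * q2 = 4 * (RatFunc.X * p1) - theta q2 - RatFunc.X + q2 * S by
      linear_combination h.e3]
    exact ((((Bd.X.mul hp (n := q2.intDegree) (by omega)).quad).sub hB.theta).sub
      (Bd.X.mono (by omega))).add (hB.mul hS (by omega))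
  obtain ⟨p0, hk, -⟩ := Bd.of_not hp1
  have hq1' : Bd (-1) q1 := (hx1.cancel p0).mono (by omega)
  apply Bd.not_X
  rw [show (RatFunc.X : RatFunc ℂ) = q1 * (S - q1) + 4 * (RatFunc.X * p2) - theta q1 by
      linear_combination h.e1]
  exact ((hq1.mul (hS.sub hq1) (by omega)).add bXp2.quad).sub hq1.theta

lemma caseBB_aux (h : Sys s a b q1 p1 q2 p2 S) (h2 : Bd (-1) p2) (hq : ¬ Bd 0 q1) :
    Bd 0 (S - q1) := by
  obtain ⟨q0, hm, hB⟩ := Bd.of_not hq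
  have : Bd q1.intDegree (q1 * (S - q1)) := by
    rw [show q1 * (S - q1) = theta q1 + RatFunc.X - 4 * (RatFunc.X * p2) by
      linear_combination -h.e1]
    exact (hB.theta.add (Bd.X.mono (by omega))).sub ((Bd.X.mul h2 (by omega)).quad)
  exact (this.cancel q0).mono (by omega)

lemma caseBB_aux2 (h : Sys s a b q1 p1 q2 p2 S) (h1 : Bd (-1) p1) (h2 : Bd (-1) p2)
    (h3 : Bd 0 (p1 * (S - 2 * q1))) : Bd 0 (q1 * p1) := by
  by_cases hq : Bd 0 q1
  · exact hq.mul h1 (by omega)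
  · rw [show q1 * p1 = p1 * (S - q1) - p1 * (S - 2 * q1) by ring]
    exact (h1.mul (caseBB_aux h h2 hq) (by omega)).sub h3

lemma caseBB (h : Sys s a b q1 p1 q2 p2 S) (h1 : Bd (-1) p1) (h2 : Bd (-1) p2)
    (h3 : Bd 0 (p1 * (S - 2 * q1))) (h4 : Bd 0 (p2 * (S - 2 * q2)))
    (h5 : ¬ Bd 0 (S - 2 * q1)) : False := by
  have hS : Bd 0 S := by
    rw [h.hS]
    exact ((caseBB_aux2 h h1 h2 h3).dbl.add (caseBB_aux2 h.swap h2 h1 h4).dbl).add h.hs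
  have hq : ¬ Bd 0 q1 := fun hh => h5 (hS.sub hh.dbl)
  apply hq
  rw [show q1 = S - (S - q1) by ring]
  exact hS.sub (caseBB_aux h h2 hq)

lemma q_bdd (h : Sys s a b q1 p1 q2 p2 S) : Bd 0 q1 ∧ Bd 0 q2 := by
  rcases dich h.ha h.e2 with h1 | ⟨h1, h1b, h1c⟩ <;>
  rcases dich h.hb h.e4 with h2 | ⟨h2, h2b, h2c⟩
  · exact ⟨caseAA h h1 h2, caseAA h.swap h2 h1⟩
  · exact (caseAB h h1 h2 h2b h2c).elim
  · exact (caseAB h.swap h2 h1 h1b h1c).elim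
  · exact (caseBB h h1c h2c h1b h2b h1).elim

lemma p_step (h : Sys s a b q1 p1 q2 p2 S) (n : ℕ) (h1 : Bd (n + 1) p1) (h2 : Bd (n + 1) p2) :
    Bd n p2 := by
  obtain ⟨hq1, hq2⟩ := q_bdd h
  have hS : Bd (n + 1) S := by
    rw [h.hS]
    exact ((hq1.mul h1 (by omega)).dbl.add (hq2.mul h2 (by omega)).dbl).add
      (h.hs.mono (by omega))
  have : Bd (n + 1) (4 * (RatFunc.X * p2)) := by
    rw [show 4 * (RatFunc.X * p2) = theta q1 - q1 * (S - q1) + RatFunc.X by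
      linear_combination -h.e1]
    exact ((hq1.theta.mono (by omega)).sub
      (hq1.mul (hS.sub (hq1.mono (by omega))) (by omega))).add (Bd.X.mono (by omega))
  exact this.of_four.of_X.mono (by omega)

lemma p_bdd (h : Sys s a b q1 p1 q2 p2 S) : Bd 0 p1 ∧ Bd 0 p2 := by
  have key : ∀ n : ℕ, Bd n p1 → Bd n p2 → Bd 0 p1 ∧ Bd 0 p2 := by
    intro n
    induction n with
    | zero => intro h1 h2; exact ⟨by simpa using h1, by simpa using h2⟩
    | succ n ih =>
      intro h1 h2
      push_cast at h1 h2
      exact ih (p_step h.swap n h2 h1) (p_step h n h1 h2)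
  exact key (p1.intDegree.natAbs + p2.intDegree.natAbs) (Bd.self.mono (by omega))
    (Bd.self.mono (by omega))

lemma S_bdd (h : Sys s a b q1 p1 q2 p2 S) : Bd 0 S := by
  obtain ⟨hq1, hq2⟩ := q_bdd h
  obtain ⟨hp1, hp2⟩ := p_bdd h
  rw [h.hS]
  exact ((hq1.mul hp1 le_rfl).dbl.add (hq2.mul hp2 le_rfl).dbl).add h.hs

lemma p_lead (h : Sys s a b q1 p1 q2 p2 S) : Bd (-1) (4 * p2 - 1) := by
  obtain ⟨hq1, hq2⟩ := q_bdd h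
  have hS := S_bdd h
  have : Bd 0 (RatFunc.X * (4 * p2 - 1)) := by
    rw [show RatFunc.X * (4 * p2 - 1) = theta q1 - q1 * (S - q1) by linear_combination -h.e1]
    exact hq1.theta.sub (hq1.mul (hS.sub hq1) le_rfl)
  exact this.of_X.mono (by omega)

end

section
variable {s a b q1 p1 q2 p2 S Q1 P1 Q2 P2 T : RatFunc ℂ}

lemma dS (h : Sys s a b q1 p1 q2 p2 S) (H : Sys s a b Q1 P1 Q2 P2 T) {n : ℤ}
    (d1 : Bd n (q1 - Q1)) (d2 : Bd n (q2 - Q2)) (f1 : Bd n (p1 - P1)) (f2 : Bd n (p2 - P2)) :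
    Bd n (S - T) := by
  obtain ⟨hq1, hq2⟩ := q_bdd h
  obtain ⟨hP1, hP2⟩ := p_bdd H
  rw [show S - T = 2 * (q1 * (p1 - P1)) + 2 * ((q1 - Q1) * P1) + 2 * (q2 * (p2 - P2))
    + 2 * ((q2 - Q2) * P2) by rw [h.hS, H.hS]; ring]
  exact (((hq1.mul f1 (by omega)).dbl.add (d1.mul hP1 (by omega)).dbl).add
    (hq2.mul f2 (by omega)).dbl).add (d2.mul hP2 (by omega)).dbl

lemma dp_step (h : Sys s a b q1 p1 q2 p2 S) (H : Sys s a b Q1 P1 Q2 P2 T) {n : ℤ}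
    (d1 : Bd n (q1 - Q1)) (d2 : Bd n (q2 - Q2)) (f1 : Bd n (p1 - P1)) (f2 : Bd n (p2 - P2)) :
    Bd (n - 1) (p2 - P2) := by
  obtain ⟨hq1, hq2⟩ := q_bdd h
  obtain ⟨hQ1, hQ2⟩ := q_bdd H
  have hS := S_bdd h
  have hd := dS h H d1 d2 f1 f2
  have : Bd n (4 * (RatFunc.X * (p2 - P2))) := by
    rw [show 4 * (RatFunc.X * (p2 - P2)) = theta (q1 - Q1) - ((q1 - Q1) * (S - q1)
      + Q1 * ((S - T) - (q1 - Q1))) by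
      rw [theta_sub]; linear_combination H.e1 - h.e1]
    exact d1.theta.sub ((d1.mul (hS.sub hq1) (by omega)).add (hQ1.mul (hd.sub d1) (by omega)))
  exact this.of_four.of_X

/-- From the `p1` equation: `3 dq1 - dq2` is small. -/
lemma dq_step (h : Sys s a b q1 p1 q2 p2 S) (H : Sys s a b Q1 P1 Q2 P2 T) {n : ℤ}
    (d1 : Bd n (q1 - Q1)) (d2 : Bd n (q2 - Q2))
    (f1 : Bd (n - 1) (p1 - P1)) (f2 : Bd (n - 1) (p2 - P2)) :
    Bd (n - 1) (2 * (q1 - Q1) + (q1 - Q1) - (q2 - Q2)) := by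
  obtain ⟨hq1, hq2⟩ := q_bdd h
  obtain ⟨hp1, hp2⟩ := p_bdd h
  obtain ⟨hP1, hP2⟩ := p_bdd H
  obtain ⟨hQ1, hQ2⟩ := q_bdd H
  have hS := S_bdd h
  have l1 := p_lead H.swap
  have l2 := p_lead H
  apply Bd.of_two
  obtain ⟨x, hx⟩ : ∃ x, x = q1 - Q1 := ⟨_, rfl⟩
  obtain ⟨y, hy⟩ : ∃ y, y = q2 - Q2 := ⟨_, rfl⟩
  obtain ⟨u, hu⟩ : ∃ u, u = p1 - P1 := ⟨_, rfl⟩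
  obtain ⟨v, hv⟩ : ∃ v, v = p2 - P2 := ⟨_, rfl⟩
  obtain ⟨U, hU⟩ : ∃ U, U = 4 * P1 - 1 := ⟨_, rfl⟩
  obtain ⟨V, hV⟩ : ∃ V, V = 4 * P2 - 1 := ⟨_, rfl⟩
  rw [← hx] at d1 ⊢
  rw [← hy] at d2 ⊢
  rw [← hu] at f1
  rw [← hv] at f2
  rw [← hU] at l1
  rw [← hV] at l2
  have key : 2 * (2 * x + x - y) = 4 * (4 * theta u) + 4 * (4 * (u * (S - 2 * q1)))
      + 4 * (4 * (2 * (P1 * (q1 * u)))) + 4 * (4 * (2 * (P1 * (q2 * v))))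
      + 4 * (2 * (P1 * (U * x + V * y)))
      - 4 * (2 * (U * x)) + 2 * (U * (x + y)) := by
    have E := h.e2
    have F := H.e2
    rw [hu, theta_sub, E, F, h.hS, H.hS, hV, hU, hv, hx, hy]
    ring
  rw [key]
  have t1 : Bd (n - 1) (u * (S - 2 * q1)) := f1.mul (hS.sub hq1.dbl) (by omega)
  have t2 : Bd (n - 1) (P1 * (q1 * u)) := hP1.mul (hq1.mul f1 le_rfl) (by omega)
  have t3 : Bd (n - 1) (P1 * (q2 * v)) := hP1.mul (hq2.mul f2 le_rfl) (by omega)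
  have t4 : Bd (n - 1) (U * x) := l1.mul d1 (by omega)
  have t5 : Bd (n - 1) (V * y) := l2.mul d2 (by omega)
  have t6 : Bd (n - 1) (P1 * (U * x + V * y)) := hP1.mul (t4.add t5) (by omega)
  have t7 : Bd (n - 1) (U * (x + y)) := l1.mul (d1.add d2) (by omega)
  exact (((((f1.theta.quad.quad.add t1.quad.quad).add t2.dbl.quad.quad).add
    t3.dbl.quad.quad).add t6.dbl.quad).sub t4.dbl.quad).add t7.dbl

lemma Sys.unique (h : Sys s a b q1 p1 q2 p2 S) (H : Sys s a b Q1 P1 Q2 P2 T) :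
    q1 = Q1 ∧ p1 = P1 ∧ q2 = Q2 ∧ p2 = P2 := by
  have key : ∀ k : ℕ, Bd (-k) (q1 - Q1) ∧ Bd (-k) (p1 - P1) ∧ Bd (-k) (q2 - Q2) ∧
      Bd (-k) (p2 - P2) := by
    intro k
    induction k with
    | zero =>
      obtain ⟨hq1, hq2⟩ := q_bdd h
      obtain ⟨hp1, hp2⟩ := p_bdd h
      obtain ⟨hP1, hP2⟩ := p_bdd H
      obtain ⟨hQ1, hQ2⟩ := q_bdd H
      simpa using ⟨hq1.sub hQ1, hp1.sub hP1, hq2.sub hQ2, hp2.sub hP2⟩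
    | succ k ih =>
      obtain ⟨d1, f1, d2, f2⟩ := ih
      have g2 := dp_step h H d1 d2 f1 f2
      have g1 := dp_step h.swap H.swap d2 d1 f2 f1
      have r1 := dq_step h H d1 d2 g1 g2
      have r2 := dq_step h.swap H.swap d2 d1 g2 g1
      have e : -((k + 1 : ℕ) : ℤ) = -(k : ℤ) - 1 := by push_cast; ring
      rw [e]
      refine ⟨?_, g1, ?_, g2⟩
      · apply Bd.of_four; apply Bd.of_two
        have := (r1.dbl.add r1).add r2
        convert this using 1; ring
      · apply Bd.of_four; apply Bd.of_two
        have := (r2.dbl.add r2).add r1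
        convert this using 1; ring
  refine ⟨?_, ?_, ?_, ?_⟩ <;> rw [← sub_eq_zero] <;> apply Bd.eq_zero_of_forall <;> intro k
  · exact (key k).1
  · exact (key k).2.1
  · exact (key k).2.2.1
  · exact (key k).2.2.2

end

lemma evR_eq (f : RatFunc ℂ) (t : ℂ) : evR f t = f.eval (RingHom.id ℂ) t := by
  simp [evR, RatFunc.eval]

lemma ev_ne {p : ℂ[X]} (hp : p ≠ 0) : ∀ᶠ t in cofinite, p.eval t ≠ 0 := by
  rw [eventually_cofinite]
  refine (p.roots.toFinset.finite_toSet).subset ?_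
  intro t ht
  simp only [ne_eq, not_not, Set.mem_ofPred_eq] at ht
  simp [hp, ht]

/-- `f` represents the function `F` away from finitely many points. -/
def Rp (f : RatFunc ℂ) (F : ℂ → ℂ) : Prop := ∀ᶠ t in cofinite, evR f t = F t

lemma Rp.self (f : RatFunc ℂ) : Rp f (evR f) := Filter.Eventually.of_forall fun _ => rfl

lemma Rp.add {f g : RatFunc ℂ} {F G : ℂ → ℂ} (hf : Rp f F) (hg : Rp g G) :
    Rp (f + g) (fun t => F t + G t) := by
  filter_upwards [hf, hg, ev_ne f.denom_ne_zero, ev_ne g.denom_ne_zero] with t h1 h2 h3 h4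
  rw [evR_eq, RatFunc.eval_add (RingHom.id ℂ) (a := t) (x := f) (y := g) (by simpa using h3) (by simpa using h4), ← evR_eq, ← evR_eq, h1, h2]

lemma Rp.mul {f g : RatFunc ℂ} {F G : ℂ → ℂ} (hf : Rp f F) (hg : Rp g G) :
    Rp (f * g) (fun t => F t * G t) := by
  filter_upwards [hf, hg, ev_ne f.denom_ne_zero, ev_ne g.denom_ne_zero] with t h1 h2 h3 h4
  rw [evR_eq, RatFunc.eval_mul (RingHom.id ℂ) (a := t) (x := f) (y := g) (by simpa using h3) (by simpa using h4), ← evR_eq, ← evR_eq, h1, h2]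

lemma Rp.poly (p : ℂ[X]) : Rp (algebraMap ℂ[X] (RatFunc ℂ) p) (fun t => p.eval t) :=
  Filter.Eventually.of_forall fun t => by simp [evR]

lemma Rp.C (c : ℂ) : Rp (RatFunc.C c) (fun _ => c) :=
  Filter.Eventually.of_forall fun t => by simp [evR]

lemma Rp.X : Rp RatFunc.X (fun t => t) :=
  Filter.Eventually.of_forall fun t => by simp [evR]

lemma Rp.sub {f g : RatFunc ℂ} {F G : ℂ → ℂ} (hf : Rp f F) (hg : Rp g G) :
    Rp (f - g) (fun t => F t - G t) := by
  have := hf.add ((Rp.C (-1)).mul hg)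
  rw [show f - g = f + RatFunc.C (-1) * g by rw [map_neg, map_one]; ring]
  filter_upwards [this] with t ht
  rw [ht]; ring

lemma Rp.ext {f g : RatFunc ℂ} {F : ℂ → ℂ} (hf : Rp f F) (hg : Rp g F) : f = g := by
  rw [← sub_eq_zero]
  by_contra h0
  have h := hf.sub hg
  have h1 : ∀ᶠ _t : ℂ in cofinite, False := by
    filter_upwards [h, ev_ne (f - g).denom_ne_zero, ev_ne (RatFunc.num_ne_zero h0)] with t h1 h2 h3
    rw [sub_self, evR, div_eq_zero_iff] at h1
    tauto
  rw [eventually_cofinite] at h1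
  exact Set.infinite_univ (α := ℂ) (by simpa using h1)

lemma Rp.theta (f : RatFunc ℂ) : Rp (theta f) (fun t => t * deriv (evR f) t) := by
  have e : _root_.theta f * algebraMap ℂ[X] (RatFunc ℂ) (f.denom ^ 2) =
      RatFunc.X * algebraMap ℂ[X] (RatFunc ℂ)
        (derivative f.num * f.denom - f.num * derivative f.denom) := by
    unfold _root_.theta
    rw [map_pow, div_mul_cancel₀ _ (pow_ne_zero _ (am_ne f.denom_ne_zero))]
  have h1 := (Rp.self (_root_.theta f)).mul (Rp.poly (f.denom ^ 2))
  rw [e] at h1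
  have h2 := Rp.X.mul (Rp.poly (derivative f.num * f.denom - f.num * derivative f.denom))
  filter_upwards [h1, h2, ev_ne f.denom_ne_zero] with t h1 h2 h3
  have hd : HasDerivAt (evR f) _ t := (f.num.hasDerivAt t).div (f.denom.hasDerivAt t) h3
  rw [h1] at h2
  rw [hd.deriv, mul_div_assoc', eq_div_iff (pow_ne_zero _ h3)]
  simpa using h2

lemma sys_of_sol {a0 a1 a3 : ℂ} {q1 p1 q2 p2 : RatFunc ℂ}
    (h : IsSasanoSol a0 a1 a3 q1 p1 q2 p2) :
    Sys (RatFunc.C (a0 + a1 + a3)) (RatFunc.C a0) (RatFunc.C a1) q1 p1 q2 p2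
      (2 * (q1 * p1) + 2 * (q2 * p2) + RatFunc.C (a0 + a1 + a3)) := by
  have h2 : Rp 2 (fun _ => 2) := by have := Rp.C 2; rwa [map_ofNat] at this
  have h4 : Rp 4 (fun _ => 4) := by have := Rp.C 4; rwa [map_ofNat] at this
  have hS := ((h2.mul ((Rp.self q1).mul (Rp.self p1))).add
    (h2.mul ((Rp.self q2).mul (Rp.self p2)))).add (Rp.C (a0 + a1 + a3))
  have hev : ∀ᶠ t in cofinite, NoPoleAt q1 t ∧ NoPoleAt p1 t ∧ NoPoleAt q2 t ∧ NoPoleAt p2 t := by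
    filter_upwards [ev_ne q1.denom_ne_zero, ev_ne p1.denom_ne_zero, ev_ne q2.denom_ne_zero,
      ev_ne p2.denom_ne_zero] with t h1 h2 h3 h4
    exact ⟨h1, h2, h3, h4⟩
  refine ⟨Bd.const _, Bd.const _, Bd.const _, rfl, ?_, ?_, ?_, ?_⟩
  · refine (Rp.theta q1).ext ?_
    filter_upwards [hev, (((Rp.self q1).mul (hS.sub (Rp.self q1))).sub Rp.X).add
      (h4.mul (Rp.X.mul (Rp.self p2)))] with t ⟨n1, n2, n3, n4⟩ ht
    rw [ht, (h t n1 n2 n3 n4).1]; ring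
  · refine (Rp.theta p1).ext ?_
    rw [neg_add_eq_sub]
    filter_upwards [hev, (Rp.C a0).sub ((Rp.self p1).mul (hS.sub (h2.mul (Rp.self q1))))]
      with t ⟨n1, n2, n3, n4⟩ ht
    rw [ht, (h t n1 n2 n3 n4).2.1]; ring
  · refine (Rp.theta q2).ext ?_
    filter_upwards [hev, (((Rp.self q2).mul (hS.sub (Rp.self q2))).sub Rp.X).add
      (h4.mul (Rp.X.mul (Rp.self p1)))] with t ⟨n1, n2, n3, n4⟩ ht
    rw [ht, (h t n1 n2 n3 n4).2.2.1]; ring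
  · refine (Rp.theta p2).ext ?_
    rw [neg_add_eq_sub]
    filter_upwards [hev, (Rp.C a1).sub ((Rp.self p2).mul (hS.sub (h2.mul (Rp.self q2))))]
      with t ⟨n1, n2, n3, n4⟩ ht
    rw [ht, (h t n1 n2 n3 n4).2.2.2]; ring

theorem sasano_rational_solution_unique (a0 a1 a2 a3 : ℂ)
    (hpar : a0 + a1 + 2 * a2 + a3 = 1 / 2)
    (q1 p1 q2 p2 q1' p1' q2' p2' : RatFunc ℂ)
    (hsol : IsSasanoSol a0 a1 a3 q1 p1 q2 p2)
    (hsol' : IsSasanoSol a0 a1 a3 q1' p1' q2' p2') :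
    q1 = q1' ∧ p1 = p1' ∧ q2 = q2' ∧ p2 = p2' := by
  exact (sys_of_sol hsol).unique (sys_of_sol hsol')
end

section
/- Let c ∈ ℂ with c ≠ 0, and let (q1,p1,q2,p2) be a rational solution of A5^(2)(α0,α1,α2,α3) such that q1 has a pole at c and none of p1, q2, p2 has a pole at c. Then q1 has a simple pole at c and exactly one of the following holds: (1) the residue of q1 at c is c (i.e., (t−c)·q1(t) → c as t → c), p1(c) = 0 and the derivative of p1 at c equals −α0/c; or (2) the residue of q1 at c is −c, p1(c) = 1, the derivative of p1 at c equals (α1+α3)/c, q2(c) = 0 and p2(c) = 0. -/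
open Filter Topology Polynomial

lemma eq_at_of_punctured {F G : ℂ → ℂ} {c : ℂ} (hF : ContinuousAt F c) (hG : ContinuousAt G c)
    (h : ∀ᶠ t in 𝓝[≠] c, F t = G t) : F c = G c :=
  tendsto_nhds_unique
    ((hF.tendsto.mono_left nhdsWithin_le_nhds).congr' h)
    (hG.tendsto.mono_left nhdsWithin_le_nhds)

lemma evR_analyticAt {f : RatFunc ℂ} {c : ℂ} (h : NoPoleAt f c) : AnalyticAt ℂ (evR f) c := by
  have h1 : AnalyticAt ℂ (fun t => f.num.eval t) c := by
    simpa using AnalyticAt.aeval_polynomial (analyticAt_id (𝕜 := ℂ) (z := c)) f.num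
  have h2 : AnalyticAt ℂ (fun t => f.denom.eval t) c := by
    simpa using AnalyticAt.aeval_polynomial (analyticAt_id (𝕜 := ℂ) (z := c)) f.denom
  exact h1.div h2 h

lemma noPole_eventually (f : RatFunc ℂ) (c : ℂ) : ∀ᶠ t in 𝓝[≠] c, NoPoleAt f t := by
  have hfin : {t : ℂ | f.denom.IsRoot t}.Finite := Polynomial.finite_setOf_isRoot f.denom_ne_zero
  have : ∀ᶠ t in 𝓝[≠] c, t ∈ ({t : ℂ | f.denom.IsRoot t} \ {c})ᶜ :=
    mem_nhdsWithin_of_mem_nhds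
      ((hfin.subset Set.diff_subset).isClosed.isOpen_compl.mem_nhds (by simp))
  filter_upwards [this, self_mem_nhdsWithin] with t ht htc hr
  exact ht ⟨hr, htc⟩

lemma pole_form (f : RatFunc ℂ) (c : ℂ) (h : ¬ NoPoleAt f c) :
    ∃ (n : ℕ) (u : ℂ → ℂ), 1 ≤ n ∧ AnalyticAt ℂ u c ∧ u c ≠ 0 ∧
      ∀ t, evR f t = u t / (t - c) ^ n := by
  have h0 : f.denom.eval c = 0 := by simpa [NoPoleAt] using h
  obtain ⟨d, hd, hnd⟩ :=
    Polynomial.exists_eq_pow_rootMultiplicity_mul_and_not_dvd f.denom f.denom_ne_zero c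
  have hdc : d.eval c ≠ 0 := fun hh => hnd (Polynomial.dvd_iff_isRoot.2 hh)
  have hnum : f.num.eval c ≠ 0 := by
    intro hh
    obtain ⟨a, b, hab⟩ := f.isCoprime_num_denom
    have := congrArg (Polynomial.eval c) hab
    simp [hh, h0] at this
  refine ⟨f.denom.rootMultiplicity c, fun t => f.num.eval t / d.eval t, ?_, ?_, ?_, ?_⟩
  · exact (Polynomial.rootMultiplicity_pos f.denom_ne_zero).2 h0
  · have h1 : AnalyticAt ℂ (fun t => f.num.eval t) c := by
      simpa using AnalyticAt.aeval_polynomial (analyticAt_id (𝕜 := ℂ) (z := c)) f.num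
    have h2 : AnalyticAt ℂ (fun t => d.eval t) c := by
      simpa using AnalyticAt.aeval_polynomial (analyticAt_id (𝕜 := ℂ) (z := c)) d
    exact h1.div h2 hdc
  · exact div_ne_zero hnum hdc
  · intro t
    have : f.denom.eval t = (t - c) ^ (f.denom.rootMultiplicity c) * d.eval t := by
      conv_lhs => rw [hd]
      simp
    simp only [evR]
    rw [this, div_div, mul_comm]

theorem sasano_q1_pole_at_c (a0 a1 a2 a3 : ℂ)
    (hpar : a0 + a1 + 2 * a2 + a3 = 1 / 2)
    (c : ℂ) (hc : c ≠ 0)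
    (q1 p1 q2 p2 : RatFunc ℂ)
    (hsol : IsSasanoSol a0 a1 a3 q1 p1 q2 p2)
    (hq1 : ¬ NoPoleAt q1 c)
    (hp1 : NoPoleAt p1 c) (hq2 : NoPoleAt q2 c) (hp2 : NoPoleAt p2 c) :
    (∃ r : ℂ, r ≠ 0 ∧ Tendsto (fun t => (t - c) * evR q1 t) (𝓝[≠] c) (𝓝 r)) ∧
    Xor'
      (Tendsto (fun t => (t - c) * evR q1 t) (𝓝[≠] c) (𝓝 c) ∧
        evR p1 c = 0 ∧ deriv (evR p1) c = -a0 / c)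
      (Tendsto (fun t => (t - c) * evR q1 t) (𝓝[≠] c) (𝓝 (-c)) ∧
        evR p1 c = 1 ∧ deriv (evR p1) c = (a1 + a3) / c ∧
        evR q2 c = 0 ∧ evR p2 c = 0) := by
  obtain ⟨n, u, hn, hu, huc, hform⟩ := pole_form q1 c hq1
  have hq1fun : evR q1 = fun t => u t / (t - c) ^ n := funext hform
  obtain ⟨m, rfl⟩ : ∃ m, n = m + 1 := ⟨n - 1, by omega⟩
  have hs : ∀ᶠ t in 𝓝[≠] c, t - c ≠ 0 := by
    filter_upwards [self_mem_nhdsWithin] with t ht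
    exact sub_ne_zero.2 ht
  have hev : ∀ᶠ t in 𝓝[≠] c, AnalyticAt ℂ u t :=
    hu.eventually_analyticAt.filter_mono nhdsWithin_le_nhds
  have hder : ∀ᶠ t in 𝓝[≠] c, deriv (evR q1) t =
      (deriv u t * (t - c) - (m + 1) * u t) / (t - c) ^ (m + 2) := by
    filter_upwards [hs, hev] with t ht hut
    have h1 : HasDerivAt (fun t : ℂ => (t - c) ^ (m + 1)) ((m + 1 : ℂ) * (t - c) ^ m) t := by
      have := ((hasDerivAt_id t).sub_const c).pow (m + 1)
      refine HasDerivAt.congr_deriv this ?_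
      simp
    have h2 := hut.differentiableAt.hasDerivAt.div h1 (pow_ne_zero _ ht)
    rw [hq1fun]
    refine h2.deriv.trans ?_
    field_simp
    ring
  have hE : ∀ᶠ t in 𝓝[≠] c, NoPoleAt q1 t ∧ NoPoleAt p1 t ∧ NoPoleAt q2 t ∧ NoPoleAt p2 t :=
    (noPole_eventually q1 c).and ((noPole_eventually p1 c).and
      ((noPole_eventually q2 c).and (noPole_eventually p2 c)))
  have ap := evR_analyticAt hp1
  have aq := evR_analyticAt hq2
  have ar := evR_analyticAt hp2
  have cu := hu.continuousAt
  have cu' := hu.deriv.continuousAt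
  have cp := ap.continuousAt
  have cp' := ap.deriv.continuousAt
  have cq := aq.continuousAt
  have cq' := aq.deriv.continuousAt
  have cr := ar.continuousAt
  have cr' := ar.deriv.continuousAt
  have cds : ContinuousAt (dslope (evR p1) c) c :=
    continuousAt_dslope_same.2 ap.differentiableAt
  have hds : ∀ t, evR p1 t = evR p1 c + (t - c) * dslope (evR p1) c t := by
    intro t
    have := sub_smul_dslope (evR p1) c t
    rw [smul_eq_mul] at this
    rw [this]; ring
  have hdc : dslope (evR p1) c c = deriv (evR p1) c := dslope_same _ _
  -- first relation: p1 (c) is 0 or 1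
  have r2 : evR p1 c = 0 ∨ evR p1 c = 1 := by
    have key := eq_at_of_punctured (c := c)
      (F := fun t => (t - c) ^ (m + 1) * (t * deriv (evR p1) t + (a0 + a1 + a3) * evR p1 t - a0
        + 2 * evR p1 t * evR q2 t * evR p2 t))
      (G := fun t => 2 * u t * evR p1 t * (1 - evR p1 t)) (by fun_prop) (by fun_prop) (by
        filter_upwards [hs, hE] with t ht hEt
        obtain ⟨-, e2, -, -⟩ := hsol t hEt.1 hEt.2.1 hEt.2.2.1 hEt.2.2.2
        rw [e2, hform t]
        field_simp
        ring)
    simp only [sub_self, ne_eq, Nat.add_eq_zero_iff, one_ne_zero, and_false, not_false_eq_true,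
      zero_pow, zero_mul] at key
    have key' : evR p1 c * (1 - evR p1 c) = 0 := by
      have : (2 * u c) * (evR p1 c * (1 - evR p1 c)) = 0 := by rw [key]; ring
      exact (mul_eq_zero.1 this).resolve_left (mul_ne_zero two_ne_zero huc)
    rcases mul_eq_zero.1 key' with h | h
    · exact Or.inl h
    · exact Or.inr (sub_eq_zero.1 h).symm
  -- second relation: comparison of the leading terms in the first equation
  have r1 : (0 : ℂ) ^ m * (-(c * (m + 1))) = u c * (2 * evR p1 c - 1) := by
    have key := eq_at_of_punctured (c := c)
      (F := fun t => (t - c) ^ m * (t * (deriv u t * (t - c) - (m + 1) * u t)))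
      (G := fun t => u t ^ 2 * (2 * evR p1 t - 1)
        + (t - c) ^ (m + 1) * u t * ((a0 + a1 + a3) + 2 * evR q2 t * evR p2 t)
        + (t - c) ^ (2 * m + 2) * (4 * t * evR p2 t - t)) (by fun_prop) (by fun_prop) (by
        filter_upwards [hs, hE, hder] with t ht hEt hd
        obtain ⟨e1, -, -, -⟩ := hsol t hEt.1 hEt.2.1 hEt.2.2.1 hEt.2.2.2
        have e : (t - c) ^ m * (t * (deriv u t * (t - c) - (m + 1) * u t))
            = (t - c) ^ (2 * m + 2) * (t * deriv (evR q1) t) := by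
          rw [hd]; field_simp; ring
        rw [e, e1, hform t]
        field_simp
        ring)
    simp only [sub_self, ne_eq, Nat.add_eq_zero_iff, one_ne_zero, OfNat.ofNat_ne_zero, and_false,
      not_false_eq_true, zero_pow, zero_mul, mul_zero, add_zero] at key
    apply mul_left_cancel₀ huc
    linear_combination key
  have hsq : (2 * evR p1 c - 1) ≠ 0 := by
    rcases r2 with h | h <;> rw [h] <;> norm_num
  have hm : m = 0 := by
    by_contra hm
    rw [zero_pow hm, zero_mul] at r1
    exact (mul_ne_zero huc hsq) r1.symm
  subst hm
  simp only [pow_zero, Nat.cast_zero, zero_add, mul_one, one_mul, pow_one] at r1 hform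
  have hT : Tendsto (fun t => (t - c) * evR q1 t) (𝓝[≠] c) (𝓝 (u c)) := by
    refine (cu.tendsto.mono_left nhdsWithin_le_nhds).congr' ?_
    filter_upwards [hs] with t ht
    rw [hform t]
    field_simp
  refine ⟨⟨u c, huc, hT⟩, ?_⟩
  rcases r2 with h | h
  · refine Or.inl ⟨⟨?_, h, ?_⟩, ?_⟩
    · have : u c = c := by rw [h] at r1; linear_combination r1
      rwa [this] at hT
    · have huv : u c = c := by rw [h] at r1; linear_combination r1
      have key := eq_at_of_punctured (c := c)
        (F := fun t => t * deriv (evR p1) t)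
        (G := fun t => 2 * u t * dslope (evR p1) c t * (1 - evR p1 t)
          - (a0 + a1 + a3) * evR p1 t + a0 - 2 * evR p1 t * evR q2 t * evR p2 t)
        (by fun_prop) (by fun_prop) (by
          filter_upwards [hs, hE] with t ht hEt
          obtain ⟨-, e2, -, -⟩ := hsol t hEt.1 hEt.2.1 hEt.2.2.1 hEt.2.2.2
          have e : dslope (evR p1) c t = evR p1 t / (t - c) := by
            rw [hds t, h]; field_simp; ring
          rw [e2, e, hform t]
          field_simp
          ring)
      simp only [h, hdc, huv] at key
      rw [eq_div_iff hc]
      linear_combination -key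
    · rintro ⟨-, h1, -⟩
      rw [h] at h1
      exact zero_ne_one h1
  · have huv : u c = -c := by rw [h] at r1; linear_combination -r1
    have hq0 : evR q2 c = 0 := by
      have key := eq_at_of_punctured (c := c)
        (F := fun t => (t - c) * (t * deriv (evR q2) t))
        (G := fun t => (t - c) * (2 * (evR q2 t) ^ 2 * evR p2 t - (evR q2 t) ^ 2
          + (a0 + a1 + a3) * evR q2 t - t + 4 * t * evR p1 t) + 2 * u t * evR p1 t * evR q2 t)
        (by fun_prop) (by fun_prop) (by
          filter_upwards [hs, hE] with t ht hEt
          obtain ⟨-, -, e3, -⟩ := hsol t hEt.1 hEt.2.1 hEt.2.2.1 hEt.2.2.2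
          rw [e3, hform t]
          field_simp)
      simp only [h, huv, sub_self, zero_mul, zero_add] at key
      apply mul_left_cancel₀ (mul_ne_zero two_ne_zero hc)
      linear_combination key
    have hr0 : evR p2 c = 0 := by
      have key := eq_at_of_punctured (c := c)
        (F := fun t => (t - c) * (t * deriv (evR p2) t))
        (G := fun t => (t - c) * (-2 * evR q2 t * (evR p2 t) ^ 2 + 2 * evR q2 t * evR p2 t
          - (a0 + a1 + a3) * evR p2 t + a1) - 2 * u t * evR p1 t * evR p2 t)
        (by fun_prop) (by fun_prop) (by
          filter_upwards [hs, hE] with t ht hEt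
          obtain ⟨-, -, -, e4⟩ := hsol t hEt.1 hEt.2.1 hEt.2.2.1 hEt.2.2.2
          rw [e4, hform t]
          field_simp)
      simp only [h, huv, sub_self, zero_mul, zero_sub] at key
      apply mul_left_cancel₀ (mul_ne_zero two_ne_zero hc)
      linear_combination -key
    refine Or.inr ⟨⟨?_, h, ?_, hq0, hr0⟩, ?_⟩
    · rwa [huv] at hT
    · have key := eq_at_of_punctured (c := c)
        (F := fun t => t * deriv (evR p1) t)
        (G := fun t => -2 * u t * dslope (evR p1) c t * evR p1 t
          - (a0 + a1 + a3) * evR p1 t + a0 - 2 * evR p1 t * evR q2 t * evR p2 t)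
        (by fun_prop) (by fun_prop) (by
          filter_upwards [hs, hE] with t ht hEt
          obtain ⟨-, e2, -, -⟩ := hsol t hEt.1 hEt.2.1 hEt.2.2.1 hEt.2.2.2
          have e : dslope (evR p1) c t = (evR p1 t - 1) / (t - c) := by
            rw [hds t, h]; field_simp; ring
          rw [e2, e, hform t]
          field_simp
          ring)
      simp only [h, hdc, huv, hq0, hr0] at key
      rw [eq_div_iff hc]
      linear_combination -key
    · rintro ⟨-, h1, -⟩
      rw [h] at h1
      exact one_ne_zero h1
end
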